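/- Let n ≥ 3 be an integer, N ∈ ℕ, and λ, μ ∈ ℂ with λ, μ ∉ {m − n/2 : m ∈ ℕ}. Then the family A_{i,j}(λ,μ) (extended by the symmetry convention A_{i,j}(λ,μ) = A_{j,i}(μ,λ) for i > j, and with terms of negative index interpreted as zero) satisfies the four-term functional equation with parameters (n,N,λ,μ) at every pair (i,j) with 1 ≤ i ≤ j ≤ N. -/

import Mathlib

/-!
After the common prefactor of the four coefficients is cancelled, the equation becomes a linear
relation between the four hypergeometric sums attached to `(i-1,j-1)`, `(i,j)`, `(i,j+1)` and
`(i-1,j)` (`sum_relation`); since `i ≤ j`, the symmetry convention never enters.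
With `x = j-i+1`, the `k`-th summands of all four sums are rational multiples of
`s k / (x + k)`, where `s k` is the summand for `(i,j)` (`summand_diag`, `summand_right`,
`summand_up`). Gosper's method then exhibits the combined summand as `G (k+1) - G k` with
`G k = -2 k (λ+n/2-k) s k`, which vanishes at `k = 0` and, because of the binomial coefficient,
at `k = i+1`. The hypotheses on `λ` and `μ` make every denominator in `A` nonzero.
-/

open Finset

noncomputable section

/-- Pochhammer symbol `(x)_l = x (x+1) ⋯ (x+l-1)`. -/
def pk (x : ℂ) (l : ℕ) : ℂ := Polynomial.eval x (ascPochhammer ℂ l)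

/-- The coefficient `A_{i,j}(λ,μ)` (intended for `i ≤ j`). -/
def A (n N : ℕ) (lam mu : ℂ) (i j : ℕ) : ℂ :=
  ((-1 : ℂ) ^ (i + j) * pk (-(N : ℂ)) (i + j) * pk (lam - N + 1) (j - i)) /
      ((2 : ℂ) ^ (i + j) * (Nat.factorial i : ℂ) * (Nat.factorial j : ℂ) *
        pk (1 - (n : ℂ) / 2 - mu) j * pk (lam + (n : ℂ) / 2 - i) i) *
    ∑ k ∈ Finset.range (i + 1),
      (-1 : ℂ) ^ k * (Nat.choose i k : ℂ) * pk ((j : ℂ) - i + 1 + k) (i - k) *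
        pk (lam + (n : ℂ) / 2 - i) (i - k) * pk (mu - (N : ℂ) + 1) k *
        pk (lam - (N : ℂ) + 1 - k) k

/-- The coefficient family extended by the symmetry convention
`A_{i,j}(λ,μ) = A_{j,i}(μ,λ)` for `i > j`. -/
def Aext (n N : ℕ) (lam mu : ℂ) (i j : ℕ) : ℂ :=
  if i ≤ j then A n N lam mu i j else A n N mu lam j i

/-- The four-term functional equation with parameters `(n,N,λ,μ)` at `(i,j)` for a family
`B : ℕ → ℕ → ℂ`, with the convention that terms of negative index are zero. -/
def FourTermEq (n N : ℕ) (lam mu : ℂ) (B : ℕ → ℕ → ℂ) (i j : ℕ) : Prop :=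
  (1 / 2 : ℂ) * ((i : ℂ) + j - N - 1) * ((i : ℂ) + j - N - 2) *
      (if i = 0 ∨ j = 0 then 0 else B (i - 1) (j - 1)) +
    (-(i : ℂ) ^ 2 + i * ((n : ℂ) + lam - 1) + ((j : ℂ) - N) * (-(j : ℂ) + N - lam - 1)) *
      B i j +
    ((j : ℂ) + 1) * ((n : ℂ) + 2 * mu - 2 - 2 * j) * B i (j + 1) +
    (1 / 2 : ℂ) * ((i : ℂ) + j - N - 1) * (-(i : ℂ) + 3 * j + N - 2 * mu) *
      (if i = 0 then 0 else B (i - 1) j) = 0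

lemma pk_zero (x : ℂ) : pk x 0 = 1 := by simp [pk]

lemma pk_succ_right (x : ℂ) (l : ℕ) : pk x (l + 1) = pk x l * (x + l) := by
  simp [pk, ascPochhammer_succ_eval]

lemma pk_succ_left (x : ℂ) (l : ℕ) : pk x (l + 1) = x * pk (x + 1) l := by
  simp [pk, ascPochhammer_succ_left, Polynomial.eval_comp]

/-- Moving the base point of a Pochhammer symbol by one, free of truncated subtraction. -/
lemma pk_shift (x : ℂ) (l : ℕ) : x * pk (x + 1) l = pk x l * (x + l) := by
  rw [← pk_succ_left, pk_succ_right]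

lemma pk_ne_zero (x : ℂ) (l : ℕ) (h : ∀ t < l, x + (t : ℂ) ≠ 0) : pk x l ≠ 0 := by
  induction l with
  | zero => simp [pk_zero]
  | succ l ih =>
    rw [pk_succ_right]
    exact mul_ne_zero (ih fun t ht => h t (by omega)) (h l (by omega))

/-- The `k`-th summand of the sum in `A`, with `x = j - i + 1`, `a = λ + n/2 - i`,
`p = λ - N + 1` and `q = μ - N + 1`. -/
def summand (x a p q : ℂ) (i k : ℕ) : ℂ :=
  (-1 : ℂ) ^ k * (Nat.choose i k : ℂ) * pk (x + k) (i - k) * pk a (i - k) * pk q k * pk (p - k) k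

lemma choose_cast (i k : ℕ) (hk : k ≤ i + 1) :
    (Nat.choose i k : ℂ) * (i + 1) = (Nat.choose (i + 1) k : ℂ) * (i + 1 - k) := by
  have h := congrArg (Nat.cast : ℕ → ℂ) (Nat.choose_mul_succ_eq i k)
  push_cast [Nat.cast_sub hk] at h
  exact h

/-- The summand for `(i-1,j-1)` in terms of the one for `(i,j)`. -/
lemma summand_diag (x a p q : ℂ) (i k : ℕ) (hk : k ≤ i + 1) :
    (i + 1) * (x + i) * a * summand x (a + 1) p q i k
      = (i + 1 - k) * summand x a p q (i + 1) k := by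
  rcases Nat.lt_or_ge i k with h | h
  · obtain rfl : k = i + 1 := by omega
    simp [summand]
  · obtain ⟨l, rfl⟩ := Nat.exists_eq_add_of_le h
    have hc := choose_cast (k + l) k hk
    have e1 : k + l - k = l := by omega
    have e2 : k + l + 1 - k = l + 1 := by omega
    simp only [summand, e1, e2]
    rw [pk_succ_right (x + k), pk_succ_left a]
    push_cast at hc ⊢
    linear_combination ((x + k + l) * a * (-1) ^ k * pk (x + k) l * pk (a + 1) l * pk q k *
      pk (p - k) k) * hc

/-- The summand for `(i,j+1)` in terms of the one for `(i,j)`. -/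
lemma summand_right (x a p q : ℂ) (i k : ℕ) (hk : k ≤ i) :
    (x + k) * summand (x + 1) a p q i k = (x + i) * summand x a p q i k := by
  obtain ⟨l, rfl⟩ := Nat.exists_eq_add_of_le hk
  have e1 : k + l - k = l := by omega
  have hs := pk_shift (x + k) l
  simp only [summand, e1]
  rw [show x + 1 + (k : ℂ) = x + k + 1 by ring]
  push_cast
  linear_combination ((-1) ^ k * ((k + l).choose k : ℂ) * pk a l * pk q k * pk (p - k) k) * hs

/-- The summand for `(i-1,j)` in terms of the one for `(i,j)`. -/
lemma summand_up (x a p q : ℂ) (i k : ℕ) (hk : k ≤ i + 1) :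
    (x + k) * ((i + 1) * a * summand (x + 1) (a + 1) p q i k)
      = (i + 1 - k) * summand x a p q (i + 1) k := by
  rcases Nat.lt_or_ge i k with h | h
  · obtain rfl : k = i + 1 := by omega
    simp [summand]
  · obtain ⟨l, rfl⟩ := Nat.exists_eq_add_of_le h
    have hc := choose_cast (k + l) k hk
    have e1 : k + l - k = l := by omega
    have e2 : k + l + 1 - k = l + 1 := by omega
    simp only [summand, e1, e2]
    rw [pk_succ_left (x + k), pk_succ_left a, show x + 1 + (k : ℂ) = x + k + 1 by ring]
    push_cast at hc ⊢
    linear_combination ((x + k) * a * (-1) ^ k * pk (x + k + 1) l * pk (a + 1) l * pk q k *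
      pk (p - k) k) * hc

/-- The hypergeometric term ratio of the summand for `(i,j)`. -/
lemma summand_succ (x a p q : ℂ) (i k : ℕ) (hk : k ≤ i) :
    (k + 1) * (x + k) * (a + i - k - 1) * summand x a p q i (k + 1)
      = -((i - k) * (q + k) * (p - k - 1)) * summand x a p q i k := by
  rcases Nat.eq_or_lt_of_le hk with rfl | h
  · simp [summand]
  · obtain ⟨l, rfl⟩ : ∃ l, i = k + l + 1 := ⟨i - k - 1, by omega⟩
    have hc := congrArg (Nat.cast : ℕ → ℂ) (Nat.choose_succ_right_eq (k + l + 1) k)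
    have e1 : k + l + 1 - k = l + 1 := by omega
    have e2 : k + l + 1 - (k + 1) = l := by omega
    rw [e1] at hc
    simp only [summand, e1, e2]
    rw [pk_succ_left (x + k), pk_succ_right a, pk_succ_right q,
      pk_succ_left (p - ((k + 1 : ℕ) : ℂ))]
    push_cast at hc ⊢
    rw [show x + ((k : ℂ) + 1) = x + k + 1 by ring, show p - ((k : ℂ) + 1) + 1 = p - k by ring]
    linear_combination ((x + k) * (a + l) * (-1) ^ (k + 1) * pk (x + k + 1) l * pk a l *
      pk q k * (q + k) * (p - k - 1) * pk (p - k) k) * hc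

/-- The four-term relation between the sums, with the common prefactor cancelled.
Here the row index is `i + 1` and `c` stands for `n / 2`. -/
lemma sum_relation (c lam mu M : ℂ) (i j : ℕ) (hij : i + 1 ≤ j) (x a p q : ℂ)
    (hx : x = j - i) (ha : a = lam + c - i - 1) (hp : p = lam - M + 1) (hq : q = mu - M + 1) :
    2 * (i + 1) * j * (j - c - mu) * a * ∑ k ∈ range (i + 1), summand x (a + 1) p q i k
    + (-(i + 1 : ℂ) ^ 2 + (i + 1) * (2 * c + lam - 1) + (j - M) * (-j + M - lam - 1))
      * ∑ k ∈ range (i + 2), summand x a p q (i + 1) k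
    + (i + 1 + j - M) * (p + j - i - 1) * ∑ k ∈ range (i + 2), summand (x + 1) a p q (i + 1) k
    - (i + 1) * a * (p + j - i - 1) * (-(i + 1) + 3 * j + M - 2 * mu)
      * ∑ k ∈ range (i + 1), summand (x + 1) (a + 1) p q i k = 0 := by
  -- The shorter sums extend by a vanishing term to the common range.
  have ext0 : ∀ y b : ℂ, ∑ k ∈ range (i + 1), summand y b p q i k
      = ∑ k ∈ range (i + 2), summand y b p q i k := by
    intro y b
    rw [sum_range_succ _ (i + 1)]
    simp [summand]
  rw [ext0, ext0]
  simp only [mul_sum, ← sum_add_distrib, ← sum_sub_distrib]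
  have tele := sum_range_sub
    (fun k : ℕ => -2 * (k : ℂ) * (lam + c - k) * summand x a p q (i + 1) k) (i + 2)
  have e0 : summand x a p q (i + 1) (i + 2) = 0 := by simp [summand]
  simp only [e0] at tele
  rw [show -2 * ((i + 2 : ℕ) : ℂ) * (lam + c - ((i + 2 : ℕ) : ℂ)) * 0
    - -2 * ((0 : ℕ) : ℂ) * (lam + c - ((0 : ℕ) : ℂ)) * summand x a p q (i + 1) 0 = 0 by
      push_cast; ring] at tele
  rw [← tele]
  refine sum_congr rfl fun k hk => ?_
  have hk' : k ≤ i + 1 := by have := mem_range.mp hk; omega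
  have hne : x + k ≠ 0 := by
    have h1 : x + k = ((j - i + k : ℕ) : ℂ) := by
      rw [hx]; push_cast [Nat.cast_sub (show i ≤ j by omega)]; ring
    rw [h1]
    exact_mod_cast (by omega : j - i + k ≠ 0)
  have h1 := summand_diag x a p q i k hk'
  have h2 := summand_right x a p q (i + 1) k hk'
  have h3 := summand_up x a p q i k hk'
  have h4 := summand_succ x a p q (i + 1) k hk'
  apply mul_left_cancel₀ hne
  push_cast at h2 h4 ⊢
  generalize summand x a p q (i + 1) k = s0 at *
  generalize summand x a p q (i + 1) (k + 1) = s1 at *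
  generalize summand x (a + 1) p q i k = s2 at *
  generalize summand (x + 1) a p q (i + 1) k = s3 at *
  generalize summand (x + 1) (a + 1) p q i k = s4 at *
  subst hx ha hp hq
  linear_combination (2 * (j - c - mu) * (j - i + k)) * h1
    + ((i + 1 + j - M) * (lam - M + 1 + j - i - 1)) * h2
    - ((lam - M + 1 + j - i - 1) * (-(i + 1) + 3 * j + M - 2 * mu)) * h3 + 2 * h4

/-- `A` with its sum expressed through `summand`. -/
lemma A_eq (n N : ℕ) (lam mu : ℂ) (i j : ℕ) :
    A n N lam mu i j =
  ((-1 : ℂ) ^ (i + j) * pk (-(N : ℂ)) (i + j) * pk (lam - N + 1) (j - i)) /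
      ((2 : ℂ) ^ (i + j) * (Nat.factorial i : ℂ) * (Nat.factorial j : ℂ) *
        pk (1 - (n : ℂ) / 2 - mu) j * pk (lam + (n : ℂ) / 2 - i) i) *
    ∑ k ∈ Finset.range (i + 1), summand ((j : ℂ) - i + 1) (lam + (n : ℂ) / 2 - i)
      (lam - (N : ℂ) + 1) (mu - (N : ℂ) + 1) i k := rfl

/-- the family `A_{i,j}(λ,μ)` (extended by symmetry) satisfies the four-term
functional equation with parameters `(n,N,λ,μ)` at every `(i,j)` with `1 ≤ i ≤ j ≤ N`. -/
theorem statement2 (n : ℕ) (hn : 3 ≤ n) (N : ℕ) (lam mu : ℂ)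
    (hlam : ∀ m : ℕ, lam ≠ (m : ℂ) - (n : ℂ) / 2)
    (hmu : ∀ m : ℕ, mu ≠ (m : ℂ) - (n : ℂ) / 2)
    (i j : ℕ) (hi : 1 ≤ i) (hij : i ≤ j) (hj : j ≤ N) :
    FourTermEq n N lam mu (Aext n N lam mu) i j := by
  obtain ⟨i, rfl⟩ : ∃ i', i = i' + 1 := ⟨i - 1, by omega⟩
  obtain ⟨l, rfl⟩ : ∃ l, j = i + l + 1 := ⟨j - i - 1, by omega⟩
  have key := sum_relation ((n : ℂ) / 2) lam mu N i (i + l + 1) (by omega) _ _ _ _ rfl rfl rfl rfl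
  have hd : ∀ t : ℕ, 1 - (n : ℂ) / 2 - mu + t ≠ 0 := fun t h =>
    hmu (t + 1) (by push_cast; linear_combination -h)
  have hdl : pk (1 - (n : ℂ) / 2 - mu) (i + l) ≠ 0 := pk_ne_zero _ _ fun t _ => hd t
  have ha0 : lam + (n : ℂ) / 2 - i - 1 ≠ 0 := fun h =>
    hlam (i + 1) (by push_cast; linear_combination h)
  have hal : pk (lam + (n : ℂ) / 2 - i) i ≠ 0 := pk_ne_zero _ _ fun t ht h =>
    hlam (i - t) (by push_cast [Nat.cast_sub ht.le]; linear_combination h)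
  have hd0 := hd (i + l)
  have hd1 := hd (i + l + 1)
  have hf1 : ((Nat.factorial i : ℕ) : ℂ) ≠ 0 := by exact_mod_cast Nat.factorial_ne_zero i
  have hf2 : ((Nat.factorial (i + l) : ℕ) : ℂ) ≠ 0 := by
    exact_mod_cast Nat.factorial_ne_zero (i + l)
  have hi1 : (i : ℂ) + 1 ≠ 0 := by exact_mod_cast Nat.succ_ne_zero i
  have hj1 : (i : ℂ) + l + 1 ≠ 0 := by exact_mod_cast Nat.succ_ne_zero (i + l)
  have hj2 : (i : ℂ) + l + 1 + 1 ≠ 0 := by exact_mod_cast Nat.succ_ne_zero (i + l + 1)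
  simp only [FourTermEq, Aext]
  rw [if_neg (by omega : ¬(i + 1 = 0 ∨ i + l + 1 = 0)), if_neg (by omega : ¬i + 1 = 0),
    if_pos (by omega : i + 1 - 1 ≤ i + l + 1 - 1), if_pos (by omega : i + 1 ≤ i + l + 1),
    if_pos (by omega : i + 1 ≤ i + l + 1 + 1), if_pos (by omega : i + 1 - 1 ≤ i + l + 1)]
  simp only [A_eq, Nat.add_sub_cancel]
  have n1 : i + l - i = l := by omega
  have n2 : i + l + 1 - (i + 1) = l := by omega
  have n3 : i + l + 1 + 1 - (i + 1) = l + 1 := by omega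
  have n4 : i + l + 1 - i = l + 1 := by omega
  have m2 : i + 1 + (i + l + 1) = i + (i + l) + 1 + 1 := by omega
  have m3 : i + 1 + (i + l + 1 + 1) = i + (i + l) + 1 + 1 + 1 := by omega
  have m4 : i + (i + l + 1) = i + (i + l) + 1 := by omega
  rw [n1, n2, n3, n4, m2, m3, m4]
  rw [pk_succ_left (lam + (n : ℂ) / 2 - ((i + 1 : ℕ) : ℂ)) i]
  simp only [pk_succ_right, Nat.factorial_succ, pow_succ]
  push_cast at key hd0 hd1 ⊢
  -- The arguments of the four sums are brought to the form used in `key`.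
  have x1 : (i : ℂ) + l - i + 1 = i + l + 1 - i := by ring
  have x2 : (i : ℂ) + l + 1 - (i + 1) + 1 = i + l + 1 - i := by ring
  have x3 : (i : ℂ) + l + 1 + 1 - (i + 1) + 1 = i + l + 1 - i + 1 := by ring
  have a1 : lam + (n : ℂ) / 2 - (i + 1) + 1 = lam + n / 2 - i := by ring
  have a2 : lam + (n : ℂ) / 2 - (i + 1) = lam + n / 2 - i - 1 := by ring
  have a3 : lam + (n : ℂ) / 2 - i - 1 + 1 = lam + n / 2 - i := by ring
  rw [a3] at key
  rw [x1, x2, x3, a1, a2]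
  rw [show i + 1 + 1 = i + 2 from rfl]
  generalize ∑ k ∈ range (i + 1), summand ((i : ℂ) + l + 1 - i) _ _ _ i k = S1 at *
  generalize ∑ k ∈ range (i + 2), summand ((i : ℂ) + l + 1 - i) _ _ _ (i + 1) k = S2 at *
  generalize ∑ k ∈ range (i + 2), summand ((i : ℂ) + l + 1 - i + 1) _ _ _ (i + 1) k = S3 at *
  generalize ∑ k ∈ range (i + 1), summand ((i : ℂ) + l + 1 - i + 1) _ _ _ i k = S4 at *
  generalize pk (1 - (n : ℂ) / 2 - mu) (i + l) = D at *
  generalize pk (lam + (n : ℂ) / 2 - i) i = E at *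
  generalize ((Nat.factorial i : ℕ) : ℂ) = f1 at *
  generalize ((Nat.factorial (i + l) : ℕ) : ℂ) = f2 at *
  generalize pk (-(N : ℂ)) (i + (i + l)) = P at *
  generalize pk (lam - (N : ℂ) + 1) l = R at *
  have h2 : (2 : ℂ) ^ (i + (i + l)) ≠ 0 := pow_ne_zero _ two_ne_zero
  generalize (2 : ℂ) ^ (i + (i + l)) = w at *
  generalize (-1 : ℂ) ^ (i + (i + l)) = e at *
  -- The linear factors of the denominator become atoms.
  generalize hA : lam + (n : ℂ) / 2 - i - 1 = a at *
  generalize hD0 : 1 - (n : ℂ) / 2 - mu + (i + l) = d0 at *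
  generalize hD1 : 1 - (n : ℂ) / 2 - mu + (i + l + 1) = d1 at *
  generalize hI : (i : ℂ) + 1 = I at *
  generalize hJ : (i : ℂ) + l + 1 = J at *
  -- Each prefactor is a polynomial multiple of the common constant `K`.
  obtain ⟨K, hK⟩ : ∃ K, K = e * P * R / (4 * w * f1 * f2 * D * E * I * J * d0 * a) := ⟨_, rfl⟩
  have F1 : e * P * R / (w * f1 * f2 * D * E) = K * (4 * I * J * d0 * a) := by
    rw [hK]; field_simp
  have F2 : ∀ u v : ℂ, e * -1 * -1 * (P * u * v) * R /
      (w * 2 * 2 * (I * f1) * (J * f2) * (D * d0) * (a * E)) = K * u * v := by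
    intro u v; rw [hK]; field_simp; ring
  have F3 : ∀ u v z r : ℂ, (J + 1) * (-2 * d1) * (e * -1 * -1 * -1 * (P * u * v * z) * (R * r) /
      (w * 2 * 2 * 2 * (I * f1) * ((J + 1) * (J * f2)) * (D * d0 * d1) * (a * E)) * S3)
        = K * u * v * z * r * S3 := by
    intro u v z r; rw [hK]; field_simp; ring
  have F4 : ∀ u r : ℂ, e * -1 * (P * u) * (R * r) / (w * 2 * f1 * (J * f2) * (D * d0) * E)
      = -2 * K * u * r * I * a := by
    intro u r; rw [hK]; field_simp; ring
  rw [show (n : ℂ) + 2 * mu - 2 - 2 * J = -2 * d1 by rw [← hD1]; ring, F1, F2, F3, F4]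
  clear F1 F2 F3 F4 hK a1 a2 a3 x1 x2 x3
  subst hD0 hA
  subst hJ hI
  linear_combination (K * (-(N : ℂ) + (i + (i + l))) * (-(N : ℂ) + (i + (i + l) + 1))) * key

end
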